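/- Let V be a finite-dimensional real normed vector space, C ⊆ V a solid closed cone, Ω ⊆ V an open set, and f : Ω → Ω a homeomorphism that is monotone with respect to C such that Per(f) is dense in Ω. Let r ≥ 1 be an integer, g = f^r, and let y, z ∈ Ω be fixed points of g with y ≪_C z and [y, z]_C ⊆ Ω. Then there exists a set M ⊆ Ω of fixed points of g that is totally ordered by ≤_C, is a connected subset of V, and satisfies y ∈ M, z ∈ M, y ≤_C m ≤_C z for all m ∈ M. -/

import Mathlib

/-!
Since `Ω` is open and `C` is solid, periodic points accumulate at every `x ∈ Ω` from within `x + C`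
and from within `x - C`. If `x ≤ g x`, then `g x ≤ g^[n] x ≤ p` for every point `p ≥ x` of period
`n`, and letting `p` tend to `x` gives `g x ≤ x`. Hence every point comparable with its image under
`g` is fixed.

Let `a < b` be fixed points of `g`. On the part of `[a, b]` where a suitable linear functional is
constant, Brouwer's theorem applies to `g` followed by the projection along segments from `a` or
`b`. It yields a point strictly between `a` and `b` that is comparable with its image, hence fixed.
So the fixed points in `[y, z]` form a densely ordered compact set, and a maximal chain in it is
compact and densely ordered too, hence connected.

Brouwer's theorem is proved by the argument of Milnor and Rogers: if `r` were a `C¹` retraction of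
the ball onto the sphere, the integral over the ball of the Jacobian of `x ↦ x + t • (r x - x)`
would be a polynomial in `t`. For small `t > 0` this map is a bijection of the ball, so the
polynomial is constantly the volume of the ball; but at `t = 1` the Jacobian is that of `r`, which
vanishes.
-/

open MeasureTheory Set Filter Topology
open scoped Polynomial NNReal RealInnerProductSpace

/-! ### Brouwer's fixed point theorem -/

theorem exists_polynomial_eval_eq_det_one_add_smul {R M : Type*} [CommRing R] [AddCommGroup M]
    [Module R M] [Module.Free R M] [Module.Finite R M] (A : Module.End R M) :
    ∃ P : R[X], P.natDegree ≤ Module.finrank R M ∧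
      ∀ t : R, P.eval t = LinearMap.det (1 + t • A) := by
  let b := Module.Free.chooseBasis R M
  let m := LinearMap.toMatrix b b A
  refine ⟨Matrix.det ((Polynomial.X : R[X]) • m.map Polynomial.C
    + (1 : Matrix _ _ R).map Polynomial.C), ?_, fun t ↦ ?_⟩
  · nontriviality R
    simpa [Module.finrank_eq_card_chooseBasisIndex] using Polynomial.natDegree_det_X_add_C_le m 1
  · rw [← LinearMap.det_toMatrix b, map_add, map_smul, LinearMap.toMatrix_one,
      ← Polynomial.coe_evalRingHom, RingHom.map_det]
    congr 1
    ext i j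
    by_cases hij : i = j
    · subst hij; simp [m]; ring
    · simp [m, Matrix.one_apply_ne hij]; ring

theorem integral_polynomial_eval_eq {α : Type*} [MeasurableSpace α] {μ : Measure α}
    {P : α → ℝ[X]} {N : ℕ} {c : ℝ} {s : Set ℝ} (hs : s.Infinite)
    (hP : ∀ x, (P x).natDegree ≤ N) (hint : ∀ t ∈ s, Integrable (fun x ↦ (P x).eval t) μ)
    (h : ∀ t ∈ s, ∫ x, (P x).eval t ∂μ = c) (t : ℝ) :
    ∫ x, (P x).eval t ∂μ = c := by
  obtain ⟨S, hSs, hS⟩ := hs.exists_subset_card_eq (N + 1)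
  have hinj : InjOn id (S : Set ℝ) := injOn_id _
  have hne : S.Nonempty := Finset.card_pos.1 (by omega)
  have hinterp (x : α) :
      (P x).eval t = ∑ a ∈ S, (P x).eval a * (Lagrange.basis S id a).eval t := by
    have hdeg : (P x).degree < S.card :=
      Polynomial.degree_le_natDegree.trans_lt (by rw [hS]; exact_mod_cast Nat.lt_succ_of_le (hP x))
    conv_lhs => rw [Lagrange.eq_interpolate hinj hdeg]
    simp [Lagrange.interpolate_apply, Polynomial.eval_finsetSum]
  have hbasis : ∑ a ∈ S, (Lagrange.basis S id a).eval t = 1 := by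
    simpa [Polynomial.eval_finsetSum] using
      congrArg (Polynomial.eval t) (Lagrange.sum_basis hinj hne)
  calc ∫ x, (P x).eval t ∂μ
      = ∑ a ∈ S, (∫ x, (P x).eval a ∂μ) * (Lagrange.basis S id a).eval t := by
        simp_rw [hinterp]
        rw [integral_finsetSum _ fun a ha ↦ (hint a (hSs ha)).mul_const _]
        simp_rw [integral_mul_const]
    _ = ∑ a ∈ S, c * (Lagrange.basis S id a).eval t :=
        Finset.sum_congr rfl fun a ha ↦ by rw [h a (hSs ha)]
    _ = c := by rw [← Finset.mul_sum, hbasis, mul_one]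

theorem inter_frontier_nonempty_of_isPreconnected {X : Type*} [TopologicalSpace X] {s t : Set X}
    {x y : X} (ht : IsPreconnected t) (hxt : x ∈ t) (hyt : y ∈ t) (hx : x ∈ s) (hy : y ∉ s) :
    (t ∩ frontier s).Nonempty := by
  by_contra! hempty
  have hdisj (z : X) (hz : z ∈ t) : z ∉ frontier s := fun hzs ↦ hempty.subset ⟨hz, hzs⟩
  have hsub : t ⊆ interior s ∪ (closure s)ᶜ := fun z hz ↦
    or_iff_not_imp_right.2 fun hcl ↦ by
      by_contra hint
      exact hdisj z hz ⟨not_not.1 hcl, hint⟩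
  have hxint : x ∈ interior s := by
    by_contra hint
    exact hdisj x hxt ⟨subset_closure hx, hint⟩
  exact hy (interior_subset (ht.subset_left_of_subset_union isOpen_interior
    isClosed_closure.isOpen_compl
    (disjoint_compl_right.mono_left (interior_subset.trans subset_closure)) hsub
    ⟨x, hxt, hxint⟩ hyt))

theorem lipschitzWith_indicator {E F : Type*} [NormedAddCommGroup E] [NormedSpace ℝ E]
    [NormedAddCommGroup F] {s : Set E} {h : E → F} {L : ℝ≥0} (hs : IsClosed s)
    (hh : LipschitzOnWith L h s) (hzero : ∀ x ∈ frontier s, h x = 0) :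
    LipschitzWith L (s.indicator h) := by
  have hmixed {x y : E} (hx : x ∈ s) (hy : y ∉ s) : dist (h x) 0 ≤ L * dist x y := by
    obtain ⟨z, hz, hzs⟩ := inter_frontier_nonempty_of_isPreconnected
      (convex_segment x y).isPreconnected (left_mem_segment ℝ x y) (right_mem_segment ℝ x y) hx hy
    calc dist (h x) 0 = dist (h x) (h z) := by rw [hzero z hzs]
      _ ≤ L * dist x z := hh.dist_le_mul x hx z (hs.frontier_subset hzs)
      _ ≤ L * dist x y := by
        gcongr
        linarith [dist_add_dist_of_mem_segment hz, dist_nonneg (x := z) (y := y)]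
  refine LipschitzWith.of_dist_le_mul fun x y ↦ ?_
  by_cases hx : x ∈ s <;> by_cases hy : y ∈ s
  · simpa only [indicator_of_mem, hx, hy] using hh.dist_le_mul x hx y hy
  · simpa only [indicator_of_mem hx, indicator_of_notMem hy] using hmixed hx hy
  · simpa only [indicator_of_notMem hx, indicator_of_mem hy, dist_comm] using hmixed hy hx
  · simp only [indicator_of_notMem hx, indicator_of_notMem hy, dist_self]
    positivity

theorem injective_id_add {E : Type*} [NormedAddCommGroup E] {k : E → E} {c : ℝ≥0} (hc : c < 1)
    (hk : LipschitzWith c k) : Function.Injective fun x ↦ x + k x :=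
  (AntilipschitzWith.id.add_lipschitzWith hk (by simpa using hc)).injective

theorem image_id_add_eq_self {E : Type*} [NormedAddCommGroup E] [CompleteSpace E] {k : E → E}
    {c : ℝ≥0} {s : Set E} (hc : c < 1) (hk : LipschitzWith c k) (hzero : ∀ x ∉ s, k x = 0) :
    (fun x ↦ x + k x) '' s = s := by
  have hsurj : Function.Surjective fun x ↦ x + k x := fun y ↦ by
    have hcontr : ContractingWith c fun x ↦ y - k x :=
      ⟨hc, by simpa using (LipschitzWith.const y).sub hk⟩
    exact ⟨hcontr.fixedPoint, eq_sub_iff_add_eq.1 hcontr.fixedPoint_isFixedPt.symm⟩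
  have hcompl : (fun x ↦ x + k x) '' sᶜ = sᶜ :=
    (image_congr fun x hx ↦ by rw [hzero x hx, add_zero]).trans (image_id' _)
  rw [← compl_inj_iff, ← image_compl_eq ⟨injective_id_add hc hk, hsurj⟩, hcompl]

section DetOneAdd

variable {E : Type*} [NormedAddCommGroup E] [NormedSpace ℝ E] [FiniteDimensional ℝ E]

theorem det_one_add_pos {A : E →L[ℝ] E} (hA : ‖A‖ < 1) : 0 < (1 + A).det := by
  have := FiniteDimensional.complete ℝ E
  have hne (t : ℝ) (ht : t ∈ Icc (0 : ℝ) 1) : (1 + t • A).det ≠ 0 := by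
    have hlt : ‖-(t • A)‖ < 1 := by
      rw [norm_neg, norm_smul, Real.norm_of_nonneg ht.1]
      exact (mul_le_of_le_one_left (norm_nonneg A) ht.2).trans_lt hA
    have hunit := isUnit_one_sub_of_norm_lt_one hlt
    rw [sub_neg_eq_add] at hunit
    exact ((hunit.map ContinuousLinearMap.toLinearMapRingHom).map LinearMap.det).ne_zero
  have hcont : Continuous fun t : ℝ ↦ (1 + t • A).det :=
    ContinuousLinearMap.continuous_det.comp (by fun_prop)
  have hzero : (1 + (0 : ℝ) • A).det = 1 := by simp [ContinuousLinearMap.det]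
  by_contra! hle
  obtain ⟨t, ht, hdet⟩ := intermediate_value_Icc' zero_le_one hcont.continuousOn
    (show (0 : ℝ) ∈ Icc ((1 + (1 : ℝ) • A).det) ((1 + (0 : ℝ) • A).det) from
      ⟨by rwa [one_smul], by rw [hzero]; exact zero_le_one⟩)
  exact hne t ht hdet

theorem setIntegral_det_one_add_eq_measureReal [MeasurableSpace E] [BorelSpace E]
    (μ : Measure E) [μ.IsAddHaarMeasure] {k : E → E} {D : E → E →L[ℝ] E} {c : ℝ≥0} {s : Set E}
    (hs : MeasurableSet s) (hc : c < 1) (hk : LipschitzWith c k) (hzero : ∀ x ∉ s, k x = 0)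
    (hD : ∀ x ∈ s, HasFDerivWithinAt k (D x) s x) (hD1 : ∀ x ∈ s, ‖D x‖ < 1) :
    ∫ x in s, (1 + D x).det ∂μ = μ.real s := by
  have := FiniteDimensional.complete ℝ E
  calc ∫ x in s, (1 + D x).det ∂μ = ∫ x in s, |(1 + D x).det| • (1 : ℝ) ∂μ :=
        setIntegral_congr_fun hs fun _ hx ↦ by simp [abs_of_pos (det_one_add_pos (hD1 _ hx))]
    _ = ∫ _ in (fun x ↦ x + k x) '' s, (1 : ℝ) ∂μ :=
        (integral_image_eq_integral_abs_det_fderiv_smul μ hs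
          (fun x hx ↦ (hasFDerivWithinAt_id x s).fun_add (hD x hx))
          (injective_id_add hc hk).injOn fun _ ↦ 1).symm
    _ = μ.real s := by rw [image_id_add_eq_self hc hk hzero]; simp

theorem setIntegral_det_one_add_smul_eq_measureReal [MeasurableSpace E] [BorelSpace E]
    (μ : Measure E) [μ.IsAddHaarMeasure] {h : E → E} {D : E → E →L[ℝ] E} {s : Set E}
    (hs : IsCompact s) (hconv : Convex ℝ s) (hh : ∀ x ∈ s, HasFDerivWithinAt h (D x) s x)
    (hD : ContinuousOn D s) (hzero : ∀ x ∈ frontier s, h x = 0) (t : ℝ) :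
    ∫ x in s, (1 + t • D x).det ∂μ = μ.real s := by
  obtain ⟨L, hL⟩ : ∃ L : ℝ≥0, ∀ x ∈ s, ‖D x‖₊ ≤ L :=
    (hs.image_of_continuousOn hD.nnnorm).bddAbove.imp fun L hL x hx ↦ hL (mem_image_of_mem _ hx)
  have hLip : LipschitzWith L (s.indicator h) :=
    lipschitzWith_indicator hs.isClosed
      (hconv.lipschitzOnWith_of_nnnorm_hasFDerivWithin_le hh hL) hzero
  have hsmall (τ : ℝ≥0) (hτ : τ * L < 1) : ∫ x in s, (1 + (τ : ℝ) • D x).det ∂μ = μ.real s := by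
    refine setIntegral_det_one_add_eq_measureReal μ (k := fun x ↦ (τ : ℝ) • s.indicator h x)
      hs.measurableSet hτ ?_ (fun x hx ↦ by simp [hx]) (fun x hx ↦ ?_) fun x hx ↦ ?_
    · simpa [Function.comp_def] using (lipschitzWith_smul (τ : ℝ)).comp hLip
    · exact ((hh x hx).const_smul (τ : ℝ)).congr (fun y hy ↦ by simp [hy]) (by simp [hx])
    · rw [← coe_nnnorm, nnnorm_smul, NNReal.nnnorm_eq]
      exact_mod_cast (mul_le_mul_right (hL x hx) τ).trans_lt hτ
  choose P hPdeg hP using fun x ↦ exists_polynomial_eval_eq_det_one_add_smul (D x : E →ₗ[ℝ] E)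
  have hPD (x : E) (τ : ℝ) : (P x).eval τ = (1 + τ • D x).det := hP x τ
  simp_rw [← hPD]
  refine integral_polynomial_eval_eq (s := Ioo (0 : ℝ) (L + 1)⁻¹) (Ioo_infinite (by positivity))
    hPdeg (fun τ _ ↦ ?_) (fun τ hτ ↦ ?_) t
  · simp_rw [hPD]
    exact (ContinuousLinearMap.continuous_det.comp_continuousOn
      (continuousOn_const.add (hD.const_smul τ))).integrableOn_compact hs
  · simp_rw [hPD]
    lift τ to ℝ≥0 using hτ.1.le
    refine hsmall τ ?_
    have hlt : τ < (L + 1)⁻¹ := by exact_mod_cast hτ.2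
    calc τ * L ≤ τ * (L + 1) := by gcongr; exact le_self_add
      _ < 1 := (NNReal.lt_inv_iff_mul_lt (by positivity)).1 hlt

end DetOneAdd

section InnerProduct

variable {E : Type*} [NormedAddCommGroup E] [InnerProductSpace ℝ E]

theorem det_fderiv_eq_zero_of_norm_eventually_const [FiniteDimensional ℝ E] {r : E → E}
    {x : E} {c : ℝ} (hr : DifferentiableAt ℝ r x) (hc : c ≠ 0)
    (hnorm : ∀ᶠ y in 𝓝 x, ‖r y‖ = c) : (fderiv ℝ r x).det = 0 := by
  by_contra hdet
  have hsurj : Function.Surjective (fderiv ℝ r x) :=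
    ((fderiv ℝ r x : E →ₗ[ℝ] E).equivOfDetNeZero hdet).surjective
  obtain ⟨v, hv⟩ := hsurj (r x)
  have hsq : (fun y ↦ ⟪r y, r y⟫) =ᶠ[𝓝 x] fun _ ↦ c ^ 2 :=
    hnorm.mono fun y hy ↦ by simp only [real_inner_self_eq_norm_sq, hy]
  have hderiv := (hr.hasFDerivAt.inner ℝ hr.hasFDerivAt).unique
    ((hasFDerivAt_const (c ^ 2) x).congr_of_eventuallyEq hsq)
  have hzero := DFunLike.congr_fun hderiv v
  simp [hv, hnorm.self_of_nhds, hc] at hzero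

theorem not_contDiffOn_retraction_sphere [FiniteDimensional ℝ E] {r : E → E} {U : Set E}
    (hU : IsOpen U) (hBU : Metric.closedBall 0 1 ⊆ U) (hnorm : ∀ x ∈ U, ‖r x‖ = 1)
    (hid : ∀ x ∈ Metric.sphere 0 1, r x = x) : ¬ ContDiffOn ℝ 1 r U := by
  intro hr
  borelize E
  have hnhds (x : E) (hx : x ∈ Metric.closedBall 0 1) : U ∈ 𝓝 x := hU.mem_nhds (hBU hx)
  have hdiff (x : E) (hx : x ∈ Metric.closedBall 0 1) : DifferentiableAt ℝ r x :=
    hr.differentiableOn one_ne_zero |>.differentiableAt (hnhds x hx)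
  have hvol := setIntegral_det_one_add_smul_eq_measureReal (Measure.addHaar : Measure E)
    (h := fun x ↦ r x - x) (D := fun x ↦ fderiv ℝ r x - 1) (isCompact_closedBall 0 1)
    (convex_closedBall 0 1)
    (fun x hx ↦ (hdiff x hx).hasFDerivAt.hasFDerivWithinAt.fun_sub (hasFDerivWithinAt_id x _))
    (((hr.continuousOn_fderiv_of_isOpen hU le_rfl).mono hBU).sub continuousOn_const)
    (fun x hx ↦ sub_eq_zero.2 (hid x (by rwa [frontier_closedBall _ one_ne_zero] at hx))) 1
  have hdet : ∀ x ∈ Metric.closedBall 0 1, (1 + (1 : ℝ) • (fderiv ℝ r x - 1)).det = 0 :=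
    fun x hx ↦ by
      rw [one_smul, add_sub_cancel]
      exact det_fderiv_eq_zero_of_norm_eventually_const (hdiff x hx) one_ne_zero
        (mem_of_superset (hnhds x hx) hnorm)
  rw [setIntegral_congr_fun Metric.isClosed_closedBall.measurableSet hdet, integral_zero] at hvol
  exact (ENNReal.toReal_pos (Metric.measure_closedBall_pos _ 0 one_pos).ne'
    measure_closedBall_lt_top.ne).ne hvol

/-- A quarter of the discriminant of the quadratic equation `‖x + l • u‖ ^ 2 = 1` in `l`. It is
positive iff the line through `x` with direction `u` crosses the unit sphere at two points. -/
def sphereDiscrim (x u : E) : ℝ := ⟪x, u⟫ ^ 2 + ‖u‖ ^ 2 * (1 - ‖x‖ ^ 2)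

/-- The larger root `l` of `‖x + l • u‖ ^ 2 = 1`, with the junk value `0` if `u = 0`: for `x` in
the unit ball, `x + l • u` is the point where the ray from `x` in direction `u` leaves the ball. -/
noncomputable def sphereExitTime (x u : E) : ℝ :=
  (-⟪x, u⟫ + √(sphereDiscrim x u)) / ‖u‖ ^ 2

theorem ne_zero_of_sphereDiscrim_pos {x u : E} (h : 0 < sphereDiscrim x u) : u ≠ 0 := by
  rintro rfl
  simp [sphereDiscrim] at h

theorem norm_add_sphereExitTime_smul {x u : E} (h : 0 < sphereDiscrim x u) :
    ‖x + sphereExitTime x u • u‖ = 1 := by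
  have hu : ‖u‖ ≠ 0 := norm_ne_zero_iff.2 (ne_zero_of_sphereDiscrim_pos h)
  have hroot : sphereExitTime x u * ‖u‖ ^ 2 = -⟪x, u⟫ + √(sphereDiscrim x u) :=
    div_mul_cancel₀ _ (pow_ne_zero 2 hu)
  have hsqrt : √(sphereDiscrim x u) ^ 2 = ⟪x, u⟫ ^ 2 + ‖u‖ ^ 2 * (1 - ‖x‖ ^ 2) := Real.sq_sqrt h.le
  rw [← sq_eq_sq₀ (norm_nonneg _) zero_le_one, one_pow, norm_add_sq_real, real_inner_smul_right,
    norm_smul, mul_pow, Real.norm_eq_abs, sq_abs]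
  refine mul_left_cancel₀ (pow_ne_zero 2 hu) ?_
  linear_combination hsqrt +
    (sphereExitTime x u * ‖u‖ ^ 2 + ⟪x, u⟫ + √(sphereDiscrim x u)) * hroot

theorem sphereExitTime_eq_zero {x u : E} (hx : ‖x‖ = 1) (h : 0 ≤ ⟪x, u⟫) :
    sphereExitTime x u = 0 := by
  simp [sphereExitTime, sphereDiscrim, hx, Real.sqrt_sq h]

theorem inner_sub_pos_of_norm_lt {x y : E} (h : ‖y‖ < ‖x‖) : 0 < ⟪x, x - y⟫ := by
  rw [inner_sub_right, real_inner_self_eq_norm_sq, sub_pos]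
  calc ⟪x, y⟫ ≤ ‖x‖ * ‖y‖ := real_inner_le_norm x y
    _ < ‖x‖ ^ 2 := by rw [sq]; gcongr; exact (norm_nonneg y).trans_lt h

theorem sphereDiscrim_sub_pos {x y : E} (hx : ‖x‖ ≤ 1) (hy : ‖y‖ < 1) (hxy : y ≠ x) :
    0 < sphereDiscrim x (x - y) := by
  rcases hx.eq_or_lt with hx | hx
  · have hinner : 0 < ⟪x, x - y⟫ := inner_sub_pos_of_norm_lt (hx ▸ hy)
    simpa [sphereDiscrim, hx] using pow_pos hinner 2
  · have hu : 0 < ‖x - y‖ := norm_pos_iff.2 (sub_ne_zero.2 hxy.symm)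
    have hgap : 0 < 1 - ‖x‖ ^ 2 := sub_pos.2 (pow_lt_one₀ (norm_nonneg x) hx two_ne_zero)
    exact add_pos_of_nonneg_of_pos (sq_nonneg _) (mul_pos (pow_pos hu 2) hgap)

theorem exists_isFixedPt_closedBall_of_contDiff [FiniteDimensional ℝ E] {p : E → E}
    (hp : ContDiff ℝ 1 p) (hlt : ∀ x ∈ Metric.closedBall (0 : E) 1, ‖p x‖ < 1) :
    ∃ x ∈ Metric.closedBall (0 : E) 1, Function.IsFixedPt p x := by
  by_contra! hne
  have hu : ContDiff ℝ 1 fun x ↦ x - p x := contDiff_id.sub hp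
  have hdiscrim : ContDiff ℝ 1 fun x ↦ sphereDiscrim x (x - p x) :=
    ((contDiff_id.inner ℝ hu).pow 2).add
      ((hu.norm_sq ℝ).mul (contDiff_const.sub (contDiff_id.norm_sq ℝ)))
  refine not_contDiffOn_retraction_sphere (U := {x | 0 < sphereDiscrim x (x - p x)})
    (r := fun x ↦ x + sphereExitTime x (x - p x) • (x - p x))
    (isOpen_lt continuous_const hdiscrim.continuous) (fun x hx ↦ ?_)
    (fun x hx ↦ norm_add_sphereExitTime_smul hx) (fun x hx ↦ ?_) ?_
  · exact sphereDiscrim_sub_pos (mem_closedBall_zero_iff.1 hx) (hlt x hx) (hne x hx)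
  · have hx1 : ‖x‖ = 1 := mem_sphere_zero_iff_norm.1 hx
    have hinner : 0 < ⟪x, x - p x⟫ :=
      inner_sub_pos_of_norm_lt (hx1 ▸ hlt x (Metric.sphere_subset_closedBall hx))
    rw [sphereExitTime_eq_zero hx1 hinner.le, zero_smul, add_zero]
  · have hexit : ContDiffOn ℝ 1 (fun x ↦ sphereExitTime x (x - p x))
        {x | 0 < sphereDiscrim x (x - p x)} :=
      ((contDiff_id.inner ℝ hu).neg.contDiffOn.add
        (hdiscrim.contDiffOn.sqrt fun x hx ↦ ne_of_gt hx)).div (hu.norm_sq ℝ).contDiffOn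
        fun x hx ↦ pow_ne_zero 2 (norm_ne_zero_iff.2 (ne_zero_of_sphereDiscrim_pos hx))
    exact contDiff_id.contDiffOn.add (hexit.smul hu.contDiffOn)

theorem exists_isFixedPt_closedBall_of_continuous [FiniteDimensional ℝ E] {F : E → E}
    (hF : Continuous F) (hlt : ∀ x ∈ Metric.closedBall (0 : E) 1, ‖F x‖ < 1) :
    ∃ x ∈ Metric.closedBall (0 : E) 1, Function.IsFixedPt F x := by
  by_contra! hne
  have hgap : ∀ x ∈ Metric.closedBall (0 : E) 1, 0 < min (dist x (F x)) (1 - ‖F x‖) :=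
    fun x hx ↦ lt_min (dist_pos.2 (Ne.symm (hne x hx))) (sub_pos.2 (hlt x hx))
  obtain ⟨x₀, hx₀, hmin⟩ := (isCompact_closedBall (0 : E) 1).exists_isMinOn ⟨0, by simp⟩
    (f := fun x ↦ min (dist x (F x)) (1 - ‖F x‖)) (by fun_prop)
  obtain ⟨p, hp, hpF, -⟩ :=
    hF.exists_contDiff_approx 1 continuous_const fun _ ↦ hgap x₀ hx₀
  have hclose (x : E) (hx : x ∈ Metric.closedBall (0 : E) 1) :
      dist (p x) (F x) < dist x (F x) ∧ dist (p x) (F x) < 1 - ‖F x‖ :=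
    lt_min_iff.1 ((hpF x).trans_le (hmin hx))
  obtain ⟨x, hx, hfix⟩ := exists_isFixedPt_closedBall_of_contDiff hp fun x hx ↦ by
    have htri := norm_le_norm_add_norm_sub (F x) (p x)
    rw [← dist_eq_norm, dist_comm] at htri
    linarith [(hclose x hx).2]
  exact (hclose x hx).1.ne (by rw [hfix])

theorem exists_continuous_retraction_of_convex [CompleteSpace E] {K : Set E} (hne : K.Nonempty)
    (hK : IsClosed K) (hconv : Convex ℝ K) :
    ∃ P : E → E, Continuous P ∧ (∀ x, P x ∈ K) ∧ ∀ x ∈ K, P x = x := by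
  choose P hPK hP using exists_norm_eq_iInf_of_complete_convex hne hK.isComplete hconv
  have hobtuse (x : E) {w : E} (hw : w ∈ K) : ⟪x - P x, w - P x⟫ ≤ 0 :=
    (norm_eq_iInf_iff_real_inner_le_zero hconv (hPK x)).1 (hP x) w hw
  refine ⟨P, (LipschitzWith.of_dist_le' (K := 1) fun x y ↦ ?_).continuous, hPK, fun x hx ↦ ?_⟩
  · have hmono : ‖P x - P y‖ ^ 2 ≤ ⟪x - y, P x - P y⟫ := by
      have hsplit : ⟪x - y, P x - P y⟫ - ‖P x - P y‖ ^ 2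
          = -⟪x - P x, P y - P x⟫ - ⟪y - P y, P x - P y⟫ := by
        rw [← real_inner_self_eq_norm_sq]
        simp only [inner_sub_left, inner_sub_right]
        ring
      linarith [hobtuse x (hPK y), hobtuse y (hPK x)]
    rw [dist_eq_norm, dist_eq_norm, one_mul]
    by_contra! hlt
    nlinarith [real_inner_le_norm (x - y) (P x - P y), norm_nonneg (x - y)]
  · exact (sub_eq_zero.1 (real_inner_self_nonpos.1 (hobtuse x hx))).symm

end InnerProduct

theorem exists_isFixedPt_of_isCompact_of_convex {V : Type*} [NormedAddCommGroup V]
    [NormedSpace ℝ V] [FiniteDimensional ℝ V] {K : Set V} {F : V → V} (hne : K.Nonempty)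
    (hK : IsCompact K) (hconv : Convex ℝ K) (hF : ContinuousOn F K) (hFK : MapsTo F K K) :
    ∃ x ∈ K, Function.IsFixedPt F x := by
  let e : V ≃L[ℝ] EuclideanSpace ℝ (Fin (Module.finrank ℝ V)) := toEuclidean
  have heK : IsCompact (e '' K) := hK.image e.continuous
  obtain ⟨P, hP, hPK, hPid⟩ := exists_continuous_retraction_of_convex (hne.image e) heK.isClosed
    (hconv.is_linear_image e.toLinearMap.isLinear)
  have hmem (x) : e.symm (P x) ∈ K := (e.image_eq_preimage_symm K).subset (hPK x)
  let G := fun x ↦ e (F (e.symm (P x)))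
  have hG : Continuous G :=
    e.continuous.comp (hF.comp_continuous (e.symm.continuous.comp hP) hmem)
  have hGK (x) : G x ∈ e '' K := mem_image_of_mem e (hFK (hmem x))
  obtain ⟨R, hR, hlt⟩ : ∃ R : ℝ, 0 < R ∧ ∀ w ∈ e '' K, ‖w‖ < R := by
    obtain ⟨R, hR⟩ := heK.isBounded.exists_norm_le
    exact ⟨max R 0 + 1, by positivity,
      fun w hw ↦ (hR w hw).trans_lt ((le_max_left R 0).trans_lt (lt_add_one _))⟩
  obtain ⟨x, -, hx⟩ := exists_isFixedPt_closedBall_of_continuous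
    (F := fun x ↦ R⁻¹ • G (R • x)) (by fun_prop) fun x _ ↦ by
      rw [norm_smul, Real.norm_of_nonneg (by positivity), inv_mul_lt_one₀ hR]
      exact hlt _ (hGK _)
  have hGw : G (R • x) = R • x := (inv_smul_eq_iff₀ hR.ne').1 hx
  have hPw : P (R • x) = R • x := hPid _ (hGw ▸ hGK _)
  refine ⟨e.symm (R • x), hPw ▸ hmem _, e.injective ?_⟩
  rw [e.apply_symm_apply]
  simpa only [G, hPw] using hGw

/-! ### Maximal chains in densely ordered compact spaces -/

section LinearOrder

variable {α : Type*} [LinearOrder α] [DenselyOrdered α] [TopologicalSpace α]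
  [OrderClosedTopology α] [CompactSpace α]

theorem mem_of_isClopen_of_lt {s : Set α} (hs : IsClopen s) {x y : α} (hx : x ∈ s)
    (hxy : x < y) : y ∈ s := by
  by_contra hy
  obtain ⟨a, ⟨has, hay⟩, hamax⟩ :=
    (hs.isClosed.inter isClosed_Iic).isCompact.exists_isGreatest ⟨x, hx, hxy.le⟩
  obtain ⟨b, ⟨hbs, hab⟩, hbmin⟩ :=
    (hs.compl.isClosed.inter isClosed_Ici).isCompact.exists_isLeast ⟨y, hy, hay⟩
  obtain ⟨c, hac, hcb⟩ := exists_between (hab.lt_of_ne (ne_of_mem_of_not_mem has hbs))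
  by_cases hcs : c ∈ s
  · exact hac.not_ge (hamax ⟨hcs, hcb.le.trans (hbmin ⟨hy, hay⟩)⟩)
  · exact hcb.not_ge (hbmin ⟨hcs, hac.le⟩)

theorem preconnectedSpace_of_compactSpace_of_denselyOrdered : PreconnectedSpace α := by
  refine preconnectedSpace_iff_clopen.2 fun s hs ↦ ?_
  rcases s.eq_empty_or_nonempty with hempty | ⟨x, hx⟩
  · exact Or.inl hempty
  refine Or.inr (eq_univ_of_forall fun y ↦ ?_)
  rcases lt_trichotomy x y with hxy | rfl | hyx
  · exact mem_of_isClopen_of_lt hs hx hxy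
  · exact hx
  · by_contra hy
    exact mem_of_isClopen_of_lt hs.compl hy hyx hx

end LinearOrder

theorem isClosed_flag {α : Type*} [PartialOrder α] [TopologicalSpace α] [OrderClosedTopology α]
    (s : Flag α) : IsClosed (s : Set α) := by
  have hinter : (s : Set α) = ⋂ a ∈ s, Iic a ∪ Ici a := by
    ext x
    rw [SetLike.mem_coe, Flag.mem_iff_forall_le_or_ge]
    simp only [mem_iInter, mem_union, mem_Iic, mem_Ici]
  rw [hinter]
  exact isClosed_biInter fun a _ ↦ isClosed_Iic.union isClosed_Ici

theorem denselyOrdered_flag {α : Type*} [PartialOrder α] [DenselyOrdered α] (s : Flag α) :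
    DenselyOrdered s :=
  denselyOrdered_iff_forall_not_covBy.2 fun _ _ h ↦ not_covBy (Flag.coe_covBy_coe.2 h)

theorem isPreconnected_flag {α : Type*} [PartialOrder α] [DenselyOrdered α] [TopologicalSpace α]
    [OrderClosedTopology α] [CompactSpace α] (s : Flag α) : IsPreconnected (s : Set α) := by
  classical
  have := denselyOrdered_flag s
  have : CompactSpace s := isCompact_iff_compactSpace.1 (isClosed_flag s).isCompact
  exact isPreconnected_iff_preconnectedSpace.2
    (preconnectedSpace_of_compactSpace_of_denselyOrdered (α := s))

theorem exists_isConnected_isChain_of_denselyOrdered {α : Type*} [PartialOrder α]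
    [TopologicalSpace α] [OrderClosedTopology α] {T : Set α} (hT : IsCompact T)
    [DenselyOrdered T] {y z : α} (hy : y ∈ T) (hz : z ∈ T) (hyz : y ≤ z) :
    ∃ M ⊆ T, IsChain (· ≤ ·) M ∧ IsConnected M ∧ y ∈ M ∧ z ∈ M := by
  have := isCompact_iff_compactSpace.1 hT
  have hpair : IsChain (· ≤ ·) ({⟨y, hy⟩, ⟨z, hz⟩} : Set T) := IsChain.pair hyz
  obtain ⟨s, hs⟩ := hpair.exists_subset_flag
  have hys : (⟨y, hy⟩ : T) ∈ s := hs (by simp)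
  have hzs : (⟨z, hz⟩ : T) ∈ s := hs (by simp)
  exact ⟨Subtype.val '' (s : Set T), Subtype.coe_image_subset T _,
    (Subtype.mono_coe _).isChain_image s.chain_le,
    ⟨⟨y, _, hys, rfl⟩, (isPreconnected_flag s).image _ continuous_subtype_val.continuousOn⟩,
    ⟨_, hys, rfl⟩, ⟨_, hzs, rfl⟩⟩

/-! ### Fixed points of monotone maps of ordered vector spaces -/

theorem exists_continuous_map_level_segment {V : Type*} [AddCommGroup V] [Module ℝ V]
    [TopologicalSpace V] [IsTopologicalAddGroup V] [ContinuousSMul ℝ V] (φ : V →L[ℝ] ℝ)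
    {a b : V} {c : ℝ} (ha : φ a < c) (hb : c < φ b) :
    ∃ H : V → V, Continuous H ∧
      ∀ w, φ (H w) = c ∧ (H w ∈ segment ℝ a w ∨ H w ∈ segment ℝ b w) := by
  let ratio (p w : V) : ℝ := (c - φ p) / (φ w - φ p)
  have hlevel {p w : V} (h : φ w - φ p ≠ 0) :
      φ (AffineMap.lineMap p w (ratio p w)) = c := by
    simp [ratio, AffineMap.lineMap_apply_module', div_mul_cancel₀ _ h]
  have hcont {p : V} {s : Set V} (h : ∀ w ∈ s, φ w - φ p ≠ 0) :
      ContinuousOn (fun w ↦ AffineMap.lineMap p w (ratio p w)) s := by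
    have hratio : ContinuousOn (ratio p) s :=
      continuousOn_const.div (by fun_prop) h
    simp only [AffineMap.lineMap_apply_module']
    fun_prop
  have hneb {w : V} (hw : φ w ≤ c) : φ w - φ b ≠ 0 := by linarith
  have hnea {w : V} (hw : c ≤ φ w) : φ w - φ a ≠ 0 := by linarith
  refine ⟨fun w ↦ if c ≤ φ w then AffineMap.lineMap a w (ratio a w)
    else AffineMap.lineMap b w (ratio b w), ?_, fun w ↦ ?_⟩
  · refine continuous_if_le continuous_const φ.continuous (hcont fun w ↦ hnea)
      (hcont fun w ↦ hneb) fun w hw ↦ ?_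
    have hratio {p : V} (h : φ w - φ p ≠ 0) : ratio p w = 1 := by
      simp only [ratio, hw, div_self h]
    rw [hratio (hnea hw.le), hratio (hneb hw.ge), AffineMap.lineMap_apply_one,
      AffineMap.lineMap_apply_one]
  · dsimp only
    split_ifs with hw
    · exact ⟨hlevel (hnea hw), Or.inl (lineMap_mem_segment ℝ a w
        ⟨div_nonneg (by linarith) (by linarith), div_le_one_of_le₀ (by linarith) (by linarith)⟩)⟩
    · exact ⟨hlevel (hneb (le_of_not_ge hw)), Or.inr (lineMap_mem_segment ℝ b w
        ⟨div_nonneg_of_nonpos (by linarith) (by linarith),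
          div_le_one_of_ge (by linarith) (by linarith)⟩)⟩

section OrderedSpace

variable {V : Type*} [NormedAddCommGroup V] [NormedSpace ℝ V] [FiniteDimensional ℝ V]
  [PartialOrder V] [IsOrderedAddMonoid V] [PosSMulMono ℝ V]

theorem exists_mem_Ioo_comparable
    [CompactIccSpace V] {a b : V} (hab : a < b) {G : V → V}
    (hG : ContinuousOn G (Icc a b)) (hGmaps : MapsTo G (Icc a b) (Icc a b)) :
    ∃ x ∈ Ioo a b, x ≤ G x ∨ G x ≤ x := by
  obtain ⟨φ, hφ⟩ := SeparatingDual.exists_eq_one (R := ℝ) (sub_ne_zero.2 hab.ne')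
  rw [map_sub] at hφ
  obtain ⟨c, ha, hb⟩ : ∃ c, φ a < c ∧ c < φ b := exists_between (by linarith)
  obtain ⟨H, hH, hHseg⟩ := exists_continuous_map_level_segment φ ha hb
  have haI : a ∈ Icc a b := left_mem_Icc.2 hab.le
  have hbI : b ∈ Icc a b := right_mem_Icc.2 hab.le
  have hHmaps : MapsTo H (Icc a b) (Icc a b ∩ φ ⁻¹' {c}) := fun w hw ↦
    ⟨(hHseg w).2.elim (fun h ↦ (convex_Icc a b).segment_subset haI hw h)
      fun h ↦ (convex_Icc a b).segment_subset hbI hw h, (hHseg w).1⟩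
  -- A fixed point of `H ∘ G` lies on a segment joining `a` or `b` to its image under `G`.
  obtain ⟨x, ⟨hxI, hxc⟩, hfix⟩ := exists_isFixedPt_of_isCompact_of_convex (F := H ∘ G)
    ⟨H a, hHmaps haI⟩ (isCompact_Icc.inter_right (isClosed_singleton.preimage φ.continuous))
    ((convex_Icc a b).inter ((convex_singleton c).is_linear_preimage φ.isLinear))
    (hH.comp_continuousOn (hG.mono inter_subset_left)) fun x hx ↦ hHmaps (hGmaps hx.1)
  refine ⟨x, ⟨hxI.1.lt_of_ne ?_, hxI.2.lt_of_ne ?_⟩, ?_⟩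
  · rintro rfl
    exact ha.ne hxc
  · rintro rfl
    exact hb.ne' hxc
  · have hGx : G x ∈ Icc a b := hGmaps hxI
    have hHG : H (G x) = x := hfix
    have hseg := (hHseg (G x)).2
    rw [hHG, segment_symm ℝ b] at hseg
    exact hseg.imp (fun h ↦ (segment_subset_Icc hGx.1 h).2)
      fun h ↦ (segment_subset_Icc hGx.2 h).1

theorem compactIccSpace_of_finiteDimensional [OrderClosedTopology V] : CompactIccSpace V := by
  refine ⟨fun {a b} ↦ Metric.isCompact_of_isClosed_isBounded isClosed_Icc ?_⟩
  -- `ρ` bounds from below the distance of a positive unit vector, such as the normalization of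
  -- `v - a`, to the negative cone, which contains the multiples of `v - b`.
  have hdisj : Disjoint (Metric.sphere (0 : V) 1 ∩ Ici 0) (Iic 0) :=
    disjoint_left.2 fun w hw hw' ↦ by
      simp [le_antisymm hw' hw.2] at hw
  obtain ⟨ρ, hρ, hfar⟩ := Metric.exists_pos_forall_lt_edist
    ((isCompact_sphere (0 : V) 1).inter_right isClosed_Ici) isClosed_Iic hdisj
  have hfar' (u w : V) (hu : ‖u‖ = 1) (hu0 : 0 ≤ u) (hw : w ≤ 0) : ρ < ‖u - w‖ := by
    have h := hfar u ⟨mem_sphere_zero_iff_norm.2 hu, hu0⟩ w hw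
    rw [edist_nndist] at h
    rw [← dist_eq_norm]
    exact_mod_cast h
  refine Metric.isBounded_iff_subset_closedBall a |>.2 ⟨‖b - a‖ / ρ, fun v hv ↦ ?_⟩
  rw [mem_closedBall_iff_norm, le_div_iff₀ (by exact_mod_cast hρ)]
  rcases eq_or_ne v a with rfl | hva
  · simp
  have hpos : 0 < ‖v - a‖ := norm_pos_iff.2 (sub_ne_zero.2 hva)
  have hlt := hfar' (‖v - a‖⁻¹ • (v - a)) (‖v - a‖⁻¹ • (v - b)) (by simp [norm_smul, hpos.ne'])
    (smul_nonneg (by positivity) (sub_nonneg.2 hv.1))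
    (smul_nonpos_of_nonneg_of_nonpos (by positivity) (sub_nonpos.2 hv.2))
  rw [← smul_sub, sub_sub_sub_cancel_left, norm_smul, norm_inv, norm_norm, lt_inv_mul_iff₀ hpos]
    at hlt
  exact hlt.le

theorem exists_isFixedPt_mem_Ioo
    [CompactIccSpace V] {Ω : Set V} {g : Ω → Ω} (hg : Continuous g) (hmono : Monotone g)
    (hcomp : ∀ x, x ≤ g x ∨ g x ≤ x → Function.IsFixedPt g x) {a b : Ω} (hab : a < b)
    (hΩ : Icc (a : V) b ⊆ Ω) (ha : Function.IsFixedPt g a) (hb : Function.IsFixedPt g b) :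
    ∃ x ∈ Ioo a b, Function.IsFixedPt g x := by
  let G : V → V := Function.extend Subtype.val (Subtype.val ∘ g) id
  have hGg (x : Ω) : G x = g x := Subtype.val_injective.extend_apply _ _ x
  have hG : ContinuousOn G Ω := continuousOn_iff_continuous_domRestrict.2 <|
    (continuous_subtype_val.comp hg).congr fun x ↦ (hGg x).symm
  have hGmaps : MapsTo G (Icc a b) (Icc a b) := fun v hv ↦ by
    lift v to Ω using hΩ hv
    rw [hGg]
    exact ⟨ha.eq ▸ hmono hv.1, hb.eq ▸ hmono hv.2⟩
  obtain ⟨x, hx, hGx⟩ :=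
    exists_mem_Ioo_comparable (Subtype.coe_lt_coe.2 hab) (hG.mono hΩ) hGmaps
  lift x to Ω using hΩ (Ioo_subset_Icc_self hx)
  rw [hGg] at hGx
  exact ⟨x, hx, hcomp x hGx⟩

theorem exists_isConnected_isChain_fixedPoints [OrderClosedTopology V] {Ω : Set V} {g : Ω → Ω}
    (hg : Continuous g) (hmono : Monotone g)
    (hcomp : ∀ x, x ≤ g x ∨ g x ≤ x → Function.IsFixedPt g x) {y z : Ω} (hyz : y ≤ z)
    (hΩ : Icc (y : V) z ⊆ Ω) (hy : Function.IsFixedPt g y) (hz : Function.IsFixedPt g z) :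
    ∃ M ⊆ Icc y z ∩ Function.fixedPoints g,
      IsChain (· ≤ ·) M ∧ IsConnected M ∧ y ∈ M ∧ z ∈ M := by
  have := compactIccSpace_of_finiteDimensional (V := V)
  have hcompact : IsCompact (Icc y z ∩ Function.fixedPoints g) := by
    refine IsCompact.inter_right (Subtype.isCompact_iff.2 ?_) (isClosed_fixedPoints hg)
    have himage : Subtype.val '' Icc y z = Icc (y : V) z :=
      (Subtype.image_preimage_coe Ω (Icc (y : V) z)).trans (inter_eq_right.2 hΩ)
    exact himage ▸ isCompact_Icc
  have : DenselyOrdered ↥(Icc y z ∩ Function.fixedPoints g) := ⟨fun a b hab ↦ by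
    obtain ⟨x, hx, hfix⟩ := exists_isFixedPt_mem_Ioo hg hmono hcomp hab
      ((Icc_subset_Icc (Subtype.coe_le_coe.2 a.2.1.1) (Subtype.coe_le_coe.2 b.2.1.2)).trans hΩ)
      a.2.2 b.2.2
    exact ⟨⟨x, ⟨a.2.1.1.trans hx.1.le, hx.2.le.trans b.2.1.2⟩, hfix⟩, hx⟩⟩
  exact exists_isConnected_isChain_of_denselyOrdered hcompact ⟨left_mem_Icc.2 hyz, hy⟩
    ⟨right_mem_Icc.2 hyz, hz⟩ hyz

end OrderedSpace

/-! ### Maps with dense periodic points -/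

theorem map_le_of_mem_closure_periodicPts {α : Type*} [Preorder α] [TopologicalSpace α]
    [ClosedIciTopology α] {g : α → α} (hg : Monotone g) {x : α} (hx : x ≤ g x)
    (hcl : x ∈ closure (Function.periodicPts g ∩ Ici x)) : g x ≤ x := by
  refine closure_minimal (t := Ici (g x)) ?_ isClosed_Ici hcl
  rintro p ⟨⟨n, hn, hp⟩, hxp⟩
  calc g x = g^[1] x := rfl
    _ ≤ g^[n] x := hg.monotone_iterate_of_le_map hx hn
    _ ≤ g^[n] p := hg.iterate n hxp
    _ = p := hp

theorem mem_closure_inter_of_convex {V : Type*} [AddCommGroup V] [Module ℝ V]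
    [TopologicalSpace V] [IsTopologicalAddGroup V] [ContinuousSMul ℝ V] {Ω s : Set V}
    (hΩ : IsOpen Ω) (hs : Convex ℝ s) (hint : (interior s).Nonempty) {D : Set Ω} (hD : Dense D)
    {x : Ω} (hx : (x : V) ∈ s) : x ∈ closure (D ∩ Subtype.val ⁻¹' s) := by
  have hx_int : x ∈ closure (Subtype.val ⁻¹' interior s : Set Ω) := by
    rw [← hΩ.isOpenMap_subtype_val.preimage_closure_eq_closure_preimage continuous_subtype_val,
      hs.closure_interior_eq_closure_of_nonempty_interior hint]
    exact subset_closure hx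
  have hsub : (Subtype.val ⁻¹' interior s : Set Ω) ⊆ closure (D ∩ Subtype.val ⁻¹' s) :=
    calc (Subtype.val ⁻¹' interior s : Set Ω)
        ⊆ closure (Subtype.val ⁻¹' interior s ∩ D) :=
          hD.open_subset_closure_inter (isOpen_interior.preimage continuous_subtype_val)
      _ ⊆ closure (D ∩ Subtype.val ⁻¹' s) := by
          rw [inter_comm]
          exact closure_mono (inter_subset_inter_right D (preimage_mono interior_subset))
  exact closure_minimal hsub isClosed_closure hx_int

theorem interior_Ici_nonempty {V : Type*} [AddCommGroup V] [PartialOrder V] [IsOrderedAddMonoid V]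
    [TopologicalSpace V] [ContinuousSub V] (h : (interior (Ici (0 : V))).Nonempty) (a : V) :
    (interior (Ici a)).Nonempty := by
  obtain ⟨e, he⟩ := h
  have hpre : (fun v : V ↦ v - a) ⁻¹' Ici 0 = Ici a := by ext v; simp
  rw [← hpre]
  exact ⟨e + a, preimage_interior_subset_interior_preimage (by fun_prop) (by simpa using he)⟩

theorem interior_Iic_nonempty {V : Type*} [AddCommGroup V] [PartialOrder V] [IsOrderedAddMonoid V]
    [TopologicalSpace V] [ContinuousSub V] (h : (interior (Ici (0 : V))).Nonempty) (a : V) :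
    (interior (Iic a)).Nonempty := by
  obtain ⟨e, he⟩ := h
  have hpre : (fun v : V ↦ a - v) ⁻¹' Ici 0 = Iic a := by ext v; simp
  rw [← hpre]
  exact ⟨a - e, preimage_interior_subset_interior_preimage (by fun_prop) (by simpa using he)⟩

theorem isFixedPt_iterate_of_comparable {V : Type*} [AddCommGroup V] [Module ℝ V]
    [TopologicalSpace V] [IsTopologicalAddGroup V] [ContinuousSMul ℝ V] [PartialOrder V]
    [IsOrderedAddMonoid V] [PosSMulMono ℝ V] [OrderClosedTopology V]
    (hsolid : (interior (Ici (0 : V))).Nonempty) {Ω : Set V} (hΩ : IsOpen Ω) {f : Ω → Ω}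
    (hf : Monotone f) (hdense : Dense (Function.periodicPts f)) {r : ℕ} {x : Ω}
    (hx : x ≤ f^[r] x ∨ f^[r] x ≤ x) : Function.IsFixedPt f^[r] x := by
  have hdense' : Dense (Function.periodicPts f^[r]) := by
    refine hdense.mono ?_
    rintro p ⟨n, hn, hp⟩
    exact ⟨n, hn, hp.iterate r⟩
  rcases hx with hx | hx
  · refine (map_le_of_mem_closure_periodicPts (hf.iterate r) hx ?_).antisymm hx
    exact mem_closure_inter_of_convex hΩ (convex_Ici (𝕜 := ℝ) (x : V))
      (interior_Ici_nonempty hsolid x) hdense' self_mem_Ici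
  · refine hx.antisymm (map_le_of_mem_closure_periodicPts (α := Ωᵒᵈ) (hf.iterate r).dual hx ?_)
    exact mem_closure_inter_of_convex hΩ (convex_Iic (𝕜 := ℝ) (x : V))
      (interior_Iic_nonempty hsolid x) hdense' self_mem_Iic

/-- A convex set closed under nonnegative scaling, as a bundled `ConvexCone`, so that the order
`x ≤ y ↔ y - x ∈ C` is available through `ConvexCone.toPartialOrder`. -/
def convexConeOfSMulMem {V : Type*} [AddCommGroup V] [Module ℝ V] {C : Set V}
    (hconv : Convex ℝ C) (hscal : ∀ c : ℝ, 0 ≤ c → ∀ x ∈ C, c • x ∈ C) : ConvexCone ℝ V where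
  carrier := C
  smul_mem' c hc x hx := hscal c hc.le x hx
  add_mem' x hx y hy := by
    have hmid : (2 : ℝ) • midpoint ℝ x y ∈ C :=
      hscal 2 zero_le_two _ (hconv.midpoint_mem hx hy)
    rwa [two_smul, midpoint_add_self] at hmid

theorem exists_connected_chain_of_fixed_points_general
    {V : Type*} [NormedAddCommGroup V] [NormedSpace ℝ V] [FiniteDimensional ℝ V]
    (C : Set V)
    (hCconv : Convex ℝ C)
    (hCscal : ∀ (c : ℝ), 0 ≤ c → ∀ x ∈ C, c • x ∈ C)
    (hCpointed : C ∩ (-C) = {0})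
    (hCclosed : IsClosed C)
    (hCsolid : (interior C).Nonempty)
    (Ω : Set V) (hΩopen : IsOpen Ω)
    (f : Ω → Ω) (hf : Continuous f)
    (hmono : ∀ x y : Ω, ((y : V) - (x : V)) ∈ C → ((f y : V) - (f x : V)) ∈ C)
    (hdense : Dense {x : Ω | ∃ p : ℕ, 1 ≤ p ∧ f^[p] x = x})
    (r : ℕ) (y z : V) (hy : y ∈ Ω) (hz : z ∈ Ω)
    (hyfix : f^[r] ⟨y, hy⟩ = ⟨y, hy⟩)
    (hzfix : f^[r] ⟨z, hz⟩ = ⟨z, hz⟩)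
    (hyz : z - y ∈ C)
    (hint : {v : V | v - y ∈ C ∧ z - v ∈ C} ⊆ Ω) :
    ∃ M : Set V, ∃ hMΩ : M ⊆ Ω,
      (∀ m, ∀ hm : m ∈ M, f^[r] ⟨m, hMΩ hm⟩ = ⟨m, hMΩ hm⟩) ∧
      (∀ a ∈ M, ∀ b ∈ M, b - a ∈ C ∨ a - b ∈ C) ∧
      IsConnected M ∧ y ∈ M ∧ z ∈ M ∧
      (∀ m ∈ M, m - y ∈ C ∧ z - m ∈ C) := by
  let K : ConvexCone ℝ V := convexConeOfSMulMem hCconv hCscal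
  have hzero : (0 : V) ∈ C := (hCpointed.ge rfl).1
  have hsalient : K.Salient := fun x hx hne hneg ↦ hne (hCpointed.le ⟨hx, hneg⟩)
  let _ : PartialOrder V := K.toPartialOrder hzero hsalient
  have hle {a b : V} : a ≤ b ↔ b - a ∈ C := Iff.rfl
  have : IsOrderedAddMonoid V := K.to_isOrderedAddMonoid hzero hsalient
  have : PosSMulMono ℝ V := .of_smul_nonneg fun c hc x hx ↦ by
    simp only [hle, sub_zero] at hx ⊢
    exact hCscal c hc x hx
  have : OrderClosedTopology V := ⟨hCclosed.preimage (continuous_snd.sub continuous_fst)⟩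
  have hsolid : (interior (Ici (0 : V))).Nonempty := by
    have hIci : Ici (0 : V) = C := by ext; simp only [mem_Ici, hle, sub_zero]
    rwa [hIci]
  have hfmono : Monotone f := fun a b ↦ hmono a b
  obtain ⟨M, hM, hchain, hconn, hyM, hzM⟩ := exists_isConnected_isChain_fixedPoints
    (y := ⟨y, hy⟩) (z := ⟨z, hz⟩) (hf.iterate r) (hfmono.iterate r)
    (fun _ ↦ isFixedPt_iterate_of_comparable hsolid hΩopen hfmono hdense) hyz hint hyfix hzfix
  refine ⟨Subtype.val '' M, Subtype.coe_image_subset Ω M, ?_, ?_,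
    hconn.image _ continuous_subtype_val.continuousOn, ⟨_, hyM, rfl⟩, ⟨_, hzM, rfl⟩, ?_⟩
  · rintro _ ⟨m, hm, rfl⟩
    exact (hM hm).2
  · rintro _ ⟨a, ha, rfl⟩ _ ⟨b, hb, rfl⟩
    exact hchain.total ha hb
  · rintro _ ⟨m, hm, rfl⟩
    exact (hM hm).1

/-- Between two strictly ordered fixed points `y ≪_C z` of `g = f^r` whose order
interval lies in `Ω`, there is a totally ordered connected set `M` of fixed
points of `g` containing `y` and `z` and contained in `[y,z]_C`. -/
theorem exists_connected_chain_of_fixed_points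
    {V : Type*} [NormedAddCommGroup V] [NormedSpace ℝ V] [FiniteDimensional ℝ V]
    (C : Set V)
    (hCconv : Convex ℝ C)
    (hCscal : ∀ (c : ℝ), 0 ≤ c → ∀ x ∈ C, c • x ∈ C)
    (hCpointed : C ∩ (-C) = {0})
    (hCclosed : IsClosed C)
    (hCsolid : (interior C).Nonempty)
    (Ω : Set V) (hΩopen : IsOpen Ω)
    (f : Ω ≃ₜ Ω)
    (hmono : ∀ x y : Ω, ((y : V) - (x : V)) ∈ C → ((f y : V) - (f x : V)) ∈ C)
    (hdense : Dense {x : Ω | ∃ p : ℕ, 1 ≤ p ∧ (⇑f)^[p] x = x})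
    (r : ℕ) (hr : 1 ≤ r)
    (y z : V) (hy : y ∈ Ω) (hz : z ∈ Ω)
    (hyfix : (⇑f)^[r] ⟨y, hy⟩ = ⟨y, hy⟩)
    (hzfix : (⇑f)^[r] ⟨z, hz⟩ = ⟨z, hz⟩)
    (hyz : z - y ∈ interior C)
    (hint : {v : V | v - y ∈ C ∧ z - v ∈ C} ⊆ Ω) :
    ∃ M : Set V, ∃ hMΩ : M ⊆ Ω,
      (∀ m, ∀ hm : m ∈ M, (⇑f)^[r] ⟨m, hMΩ hm⟩ = ⟨m, hMΩ hm⟩) ∧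
      (∀ a ∈ M, ∀ b ∈ M, b - a ∈ C ∨ a - b ∈ C) ∧
      IsConnected M ∧ y ∈ M ∧ z ∈ M ∧
      (∀ m ∈ M, m - y ∈ C ∧ z - m ∈ C) :=
  exists_connected_chain_of_fixed_points_general C hCconv hCscal hCpointed hCclosed hCsolid Ω
    hΩopen f f.continuous hmono hdense r y z hy hz hyfix hzfix (interior_subset hyz) hint
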